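/- If B_1(Λ) is uncountable, then the blur shift space Σ_Λ (with the subspace topology inherited from the full blur shift Σ) cannot be simultaneously compact and first countable. -/

import Mathlib

open Set Filter Topology

namespace BlurPaper

/-- The extended alphabet `Ā = A ⊕ V`, where each blurred set `H ∈ V` is regarded
as a new symbol `H̃`. -/
abbrev Symb (A : Type*) (V : Set (Set A)) := A ⊕ {H : Set A // H ∈ V}

/-- `V` is a family of blurred sets: every member is infinite and two distinct members
have finite intersection. -/
def IsBlurFamily {A : Type*} (V : Set (Set A)) : Prop :=
  (∀ H ∈ V, H.Infinite) ∧ ∀ G ∈ V, ∀ H ∈ V, G ≠ H → (G ∩ H).Finite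

/-- The full blur shift `Σ`: sequences over `Ā` such that a blur symbol is followed
by the same blur symbol. -/
def FullBlur (A : Type*) (V : Set (Set A)) : Set (ℕ → Symb A V) :=
  {x | ∀ (i : ℕ) (H : {H : Set A // H ∈ V}), x i = Sum.inr H → x (i + 1) = Sum.inr H}

/-- Generalized cylinder `Z(α)`. -/
def Z (A : Type*) (V : Set (Set A)) (α : List A) : Set (FullBlur A V) :=
  {x | ∀ i : Fin α.length, x.1 i = Sum.inl (α.get i)}

/-- Generalized cylinder `Z(α, H, F)`. -/
def ZH (A : Type*) (V : Set (Set A)) (α : List A) (H : {H : Set A // H ∈ V})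
    (F : Set A) : Set (FullBlur A V) :=
  {x | (∀ i : Fin α.length, x.1 i = Sum.inl (α.get i)) ∧
    (x.1 α.length = Sum.inr H ∨ ∃ a ∈ H.1 \ F, x.1 α.length = Sum.inl a)}

/-- The collection of all generalized cylinders. -/
def Cylinders (A : Type*) (V : Set (Set A)) : Set (Set (FullBlur A V)) :=
  {U | ∃ α : List A, U = Z A V α} ∪
  {U | ∃ (α : List A) (H : {H : Set A // H ∈ V}) (F : Set A),
    F ⊆ H.1 ∧ F.Finite ∧ U = ZH A V α H F}

/-- The topology on the full blur shift generated by the generalized cylinders. -/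
def tau (A : Type*) (V : Set (Set A)) : TopologicalSpace (FullBlur A V) :=
  TopologicalSpace.generateFrom (Cylinders A V)

/-- The shift map on the full blur shift. -/
def shift (A : Type*) (V : Set (Set A)) : FullBlur A V → FullBlur A V :=
  fun x => ⟨fun i => x.1 (i + 1), fun i H h => x.2 (i + 1) H h⟩

/-- The shift map on `A^ℕ`. -/
def shiftSeq (A : Type*) : (ℕ → A) → ℕ → A := fun x i => x (i + 1)

/-- The prodiscrete topology on `A^ℕ` (product of discrete topologies). -/
def prodDiscrete (A : Type*) : TopologicalSpace (ℕ → A) :=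
  @Pi.topologicalSpace ℕ (fun _ => A) fun _ => ⊥

/-- A (classical) shift space over `A`: closed in the prodiscrete topology and
invariant under the shift map. -/
def IsShiftSpace {A : Type*} (Λ : Set (ℕ → A)) : Prop :=
  @IsClosed _ (prodDiscrete A) Λ ∧ ∀ x ∈ Λ, shiftSeq A x ∈ Λ

/-- `w ∈ B(Y)`: the finite word `w` appears as an initial word of some element of `Y`. -/
def InLang {A : Type*} (Y : Set (ℕ → A)) (w : List A) : Prop :=
  ∃ x ∈ Y, ∀ i : Fin w.length, x i = w.get i

/-- The follower set `F_Y(w) = {a : w a ∈ B(Y)}`. -/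
def Fol {A : Type*} (Y : Set (ℕ → A)) (w : List A) : Set A :=
  {a | InLang Y (w ++ [a])}

/-- The predecessor set `P_Y(a) = {b : b a ∈ B(Y)}`. -/
def Pred {A : Type*} (Y : Set (ℕ → A)) (a : A) : Set A :=
  {b | InLang Y [b, a]}

/-- `B₁(Y)`: the set of letters occurring in sequences of `Y`. -/
def letters {A : Type*} (Y : Set (ℕ → A)) : Set A :=
  {a | ∃ x ∈ Y, ∃ i, x i = a}

/-- The canonical embedding `A^ℕ → Σ`. -/
def embed (A : Type*) (V : Set (Set A)) : (ℕ → A) → FullBlur A V :=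
  fun x => ⟨fun i => Sum.inl (x i), fun _ _ h => absurd h (by simp)⟩

/-- The point `(a₀ … a_{n-1} H̃ H̃ H̃ …)` of the full blur shift. -/
def wordBlur {A : Type*} {V : Set (Set A)} (α : List A) (H : {H : Set A // H ∈ V}) :
    FullBlur A V :=
  ⟨fun i => if h : i < α.length then Sum.inl (α.get ⟨i, h⟩) else Sum.inr H, by
    intro i K hK
    by_cases h : i < α.length
    · simp only [dif_pos h] at hK
      exact absurd hK (by simp)
    · simp only [dif_neg h] at hK
      simp only [dif_neg (by omega : ¬ i + 1 < α.length)]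
      exact hK⟩

/-- The boundary `∂Y`: points `(a₀ … a_{n-1} H̃ H̃ …)` with `a₀ … a_{n-1} ∈ B(Y)` and
`F_Y(a₀ … a_{n-1}) ∩ H` infinite. -/
def boundary (A : Type*) (V : Set (Set A)) (Y : Set (ℕ → A)) : Set (FullBlur A V) :=
  {z | ∃ (α : List A) (H : {H : Set A // H ∈ V}),
    z = wordBlur α H ∧ InLang Y α ∧ (Fol Y α ∩ H.1).Infinite}

/-- The blur shift space `Σ_Y = Y ∪ ∂Y` of `Y` with resolution `V`. -/
def SigmaOf (A : Type*) (V : Set (Set A)) (Y : Set (ℕ → A)) : Set (FullBlur A V) :=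
  embed A V '' Y ∪ boundary A V Y

/-- The subspace topology inherited from the full blur shift. -/
def subTau (A : Type*) (V : Set (Set A)) (X : Set (FullBlur A V)) :
    TopologicalSpace X :=
  TopologicalSpace.induced Subtype.val (tau A V)

/-- `V_Λ`: the blurred sets that appear in `Σ_Λ`, i.e. those meeting `B₁(Λ)` in an
infinite set. -/
def VLam (A : Type*) (V : Set (Set A)) (Λ : Set (ℕ → A)) : Set (Set A) :=
  {H | H ∈ V ∧ (letters Λ ∩ H).Infinite}

/-! The letters `a` that may follow `w` and lie in `H` give points `w a …` of `Σ_Λ` converging to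
`w H̃ H̃ …` along the cofinite filter, although that limit can be separated from each of them; under
first countability this allows only countably many such letters. By the Lindelöf property, countably
many of the sets `Z(w b)` and `Z(w, H, ∅)` cover the points of `Σ_Λ` that start with `w`, so every
follower set is countable, hence so is the set of words of any given length. -/

section Cylinders

variable {A : Type*} {V : Set (Set A)} {α β : List A} {H : {H : Set A // H ∈ V}} {F : Set A}
  {x : FullBlur A V} {a : A}

theorem mem_Z_iff_getElem :
    x ∈ Z A V α ↔ ∀ i (hi : i < α.length), x.1 i = Sum.inl α[i] :=
  Fin.forall_iff

theorem mem_Z_append_singleton :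
    x ∈ Z A V (α ++ [a]) ↔ x ∈ Z A V α ∧ x.1 α.length = Sum.inl a := by
  simp only [mem_Z_iff_getElem, List.length_append, List.length_singleton]
  refine ⟨fun h => ⟨fun i hi => ?_, ?_⟩, fun ⟨hα, ha⟩ i hi => ?_⟩
  · simpa only [List.getElem_append_left hi] using h i (Nat.lt_succ_of_lt hi)
  · simpa only [List.getElem_concat_length] using h α.length (Nat.lt_succ_self _)
  · rcases Nat.lt_succ_iff_lt_or_eq.1 hi with hlt | rfl
    · simpa only [List.getElem_append_left hlt] using hα i hlt
    · simpa only [List.getElem_concat_length] using ha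

theorem eq_of_mem_Z_append_singleton {b : A} (ha : x ∈ Z A V (α ++ [a]))
    (hb : x ∈ Z A V (α ++ [b])) : a = b :=
  Sum.inl_injective <| (mem_Z_append_singleton.1 ha).2.symm.trans (mem_Z_append_singleton.1 hb).2

theorem Z_subset_of_prefix (h : β <+: α) : Z A V α ⊆ Z A V β := by
  obtain ⟨hle, hget⟩ := List.prefix_iff_getElem.1 h
  intro x hx
  rw [mem_Z_iff_getElem] at hx ⊢
  intro i hi
  rw [hx i (hi.trans_le hle), hget i hi]

theorem wordBlur_apply_length : (wordBlur α H).1 α.length = Sum.inr H :=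
  dif_neg (lt_irrefl _)

theorem wordBlur_mem_Z_iff : wordBlur α H ∈ Z A V β ↔ β <+: α := by
  refine ⟨fun h => ?_, fun h => Z_subset_of_prefix h fun i => dif_pos i.2⟩
  have hget : ∀ i (hi : i < β.length), ∃ hα : i < α.length, α[i] = β[i] := by
    intro i hi
    have hi' := mem_Z_iff_getElem.1 h i hi
    by_cases hα : i < α.length
    · exact ⟨hα, by simpa [wordBlur, hα] using hi'⟩
    · simp [wordBlur, hα] at hi'
  have hle : β.length ≤ α.length := le_of_forall_lt fun i hi => (hget i hi).1
  exact List.prefix_iff_getElem.2 ⟨hle, fun i hi => (hget i hi).2.symm⟩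

theorem wordBlur_mem_ZH : wordBlur α H ∈ ZH A V α H F :=
  ⟨wordBlur_mem_Z_iff.2 List.prefix_rfl, Or.inl wordBlur_apply_length⟩

theorem mem_ZH_iff_of_mem_Z (hx : x ∈ Z A V (α ++ [a])) :
    x ∈ ZH A V α H F ↔ a ∈ H.1 \ F := by
  obtain ⟨hα, ha⟩ := mem_Z_append_singleton.1 hx
  refine ⟨fun h => ?_, fun h => ⟨hα, Or.inr ⟨a, h, ha⟩⟩⟩
  simpa [ha] using h.2

theorem exists_finite_ZH_subset {s : Set (FullBlur A V)} (hs : s ∈ Cylinders A V)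
    (hp : wordBlur α H ∈ s) : ∃ F : Set A, F.Finite ∧ ZH A V α H F ⊆ s := by
  rcases hs with ⟨β, rfl⟩ | ⟨β, K, F, -, hF, rfl⟩
  · exact ⟨∅, finite_empty, fun x hx => Z_subset_of_prefix (wordBlur_mem_Z_iff.1 hp) hx.1⟩
  · rcases hp with ⟨hβ, hK | ⟨b, hb, hpb⟩⟩
    · obtain rfl : β = α := by
        refine (wordBlur_mem_Z_iff.1 hβ).eq_of_length_le (not_lt.1 fun hlt => ?_)
        simp [wordBlur, hlt] at hK
      obtain rfl : H = K := Sum.inr_injective (wordBlur_apply_length.symm.trans hK)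
      exact ⟨F, hF, Subset.rfl⟩
    · have hprefix : β ++ [b] <+: α :=
        wordBlur_mem_Z_iff.1 (mem_Z_append_singleton.2 ⟨hβ, hpb⟩)
      exact ⟨∅, finite_empty, fun x hx =>
        (mem_ZH_iff_of_mem_Z (Z_subset_of_prefix hprefix hx.1)).2 hb⟩

end Cylinders

section Topology

instance {A : Type*} {V : Set (Set A)} : TopologicalSpace (FullBlur A V) := tau A V

variable {A : Type*} {V : Set (Set A)} {α : List A} {H : {H : Set A // H ∈ V}}

theorem isOpen_Z : IsOpen (Z A V α) :=
  TopologicalSpace.isOpen_generateFrom_of_mem (Or.inl ⟨α, rfl⟩)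

theorem isOpen_ZH {F : Set A} (hF : F.Finite) : IsOpen (ZH A V α H F) := by
  have hinter : ZH A V α H F = ZH A V α H (H.1 ∩ F) := by
    simp only [ZH, sdiff_self_inter]
  rw [hinter]
  exact TopologicalSpace.isOpen_generateFrom_of_mem
    (Or.inr ⟨α, H, H.1 ∩ F, inter_subset_left, hF.subset inter_subset_right, rfl⟩)

theorem isClosed_Z : IsClosed (Z A V α) := by
  induction α using List.reverseRecOn with
  | nil =>
    have huniv : Z A V [] = univ := eq_univ_of_forall fun x i => i.elim0
    exact huniv ▸ isClosed_univ
  | append_singleton α a ih =>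
    refine isOpen_compl_iff.1 (isOpen_iff_mem_nhds.2 fun x hx => ?_)
    by_cases hα : x ∈ Z A V α
    · rcases hxn : x.1 α.length with b | H
      · have hxb : x ∈ Z A V (α ++ [b]) := mem_Z_append_singleton.2 ⟨hα, hxn⟩
        filter_upwards [isOpen_Z.mem_nhds hxb] with z hzb hza
        exact hx (eq_of_mem_Z_append_singleton hza hzb ▸ hxb)
      · have hxH : x ∈ ZH A V α H {a} := ⟨hα, Or.inl hxn⟩
        filter_upwards [(isOpen_ZH (finite_singleton a)).mem_nhds hxH] with z hzH hza
        exact ((mem_ZH_iff_of_mem_Z hza).1 hzH).2 rfl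
    · filter_upwards [ih.isOpen_compl.mem_nhds hα] with z hz hza
      exact hz (mem_Z_append_singleton.1 hza).1

theorem tendsto_nhds_wordBlur {ι : Type*} {l : Filter ι} {b : ι → A} {y : ι → FullBlur A V}
    (hb : Tendsto b l cofinite) (hbH : ∀ᶠ i in l, b i ∈ H.1)
    (hy : ∀ᶠ i in l, y i ∈ Z A V (α ++ [b i])) : Tendsto y l (𝓝 (wordBlur α H)) := by
  refine TopologicalSpace.tendsto_nhds_generateFrom_iff.2 fun s hs hp => ?_
  obtain ⟨F, hF, hFs⟩ := exists_finite_ZH_subset hs hp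
  filter_upwards [hb hF.compl_mem_cofinite, hbH, hy] with i hbF hbH hy
  exact hFs ((mem_ZH_iff_of_mem_Z hy).2 ⟨hbH, hbF⟩)

theorem notMem_ker_nhds_wordBlur {x : FullBlur A V} {a : A} (hx : x ∈ Z A V (α ++ [a])) :
    x ∉ (𝓝 (wordBlur α H)).ker := by
  intro hker
  have hxH : x ∈ ZH A V α H {a} :=
    mem_ker.1 hker _ ((isOpen_ZH (finite_singleton a)).mem_nhds wordBlur_mem_ZH)
  exact ((mem_ZH_iff_of_mem_Z hx).1 hxH).2 rfl

end Topology

section Language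

variable {A : Type*} {Λ : Set (ℕ → A)}

theorem inLang_iff_exists_embed_mem_Z {V : Set (Set A)} {w : List A} :
    InLang Λ w ↔ ∃ x ∈ Λ, embed A V x ∈ Z A V w := by
  simp only [InLang, Z, embed, mem_ofPred_eq, Sum.inl.injEq]

theorem inLang_of_mem_Fol {w : List A} {a : A} (ha : a ∈ Fol Λ w) : InLang Λ w := by
  obtain ⟨x, hx, hxwa⟩ := inLang_iff_exists_embed_mem_Z (V := ∅).1 ha
  exact inLang_iff_exists_embed_mem_Z.2 ⟨x, hx, (mem_Z_append_singleton.1 hxwa).1⟩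

theorem map_range_succ (x : ℕ → A) (n : ℕ) :
    (List.range (n + 1)).map x = (List.range n).map x ++ [x n] := by
  rw [List.range_succ, List.map_append, List.map_singleton]

theorem mem_Fol_map_range {x : ℕ → A} (hx : x ∈ Λ) (n : ℕ) :
    x n ∈ Fol Λ ((List.range n).map x) := by
  refine ⟨x, hx, fun i => ?_⟩
  simp only [← map_range_succ, List.get_eq_getElem, List.getElem_map, List.getElem_range]

theorem countable_image_map_range (hΛ : ∀ w, (Fol Λ w).Countable) (n : ℕ) :
    ((fun x : ℕ → A => (List.range n).map x) '' Λ).Countable := by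
  induction n with
  | zero => exact (countable_singleton []).mono (image_subset_iff.2 fun _ _ => mem_singleton _)
  | succ n ih =>
    refine (ih.biUnion fun w _ => (hΛ w).image fun a => w ++ [a]).mono ?_
    rintro _ ⟨x, hx, rfl⟩
    exact mem_biUnion (mem_image_of_mem _ hx)
      ⟨x n, mem_Fol_map_range hx n, (map_range_succ x n).symm⟩

theorem countable_letters_of_countable_Fol (hΛ : ∀ w, (Fol Λ w).Countable) :
    (letters Λ).Countable := by
  refine (countable_iUnion fun n =>
    (countable_image_map_range hΛ n).biUnion fun w _ => hΛ w).mono ?_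
  rintro _ ⟨x, hx, n, rfl⟩
  exact mem_iUnion.2 ⟨n, mem_biUnion (mem_image_of_mem _ hx) (mem_Fol_map_range hx n)⟩

end Language

section BlurShift

variable {A : Type*} {V : Set (Set A)} {Λ : Set (ℕ → A)}

theorem nonempty_SigmaOf_inter_Z {w : List A} (hw : InLang Λ w) :
    (SigmaOf A V Λ ∩ Z A V w).Nonempty := by
  obtain ⟨x, hx, hxw⟩ := inLang_iff_exists_embed_mem_Z.1 hw
  exact ⟨embed A V x, Or.inl ⟨x, hx, rfl⟩, hxw⟩

theorem wordBlur_mem_SigmaOf {w : List A} {H : {H : Set A // H ∈ V}}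
    (hwH : (Fol Λ w ∩ H.1).Infinite) : wordBlur w H ∈ SigmaOf A V Λ := by
  obtain ⟨a, ha, -⟩ := hwH.nonempty
  exact Or.inr ⟨w, H, rfl, inLang_of_mem_Fol ha, hwH⟩

theorem countable_Fol_inter [FirstCountableTopology (SigmaOf A V Λ)] (w : List A)
    (H : {H : Set A // H ∈ V}) : (Fol Λ w ∩ H.1).Countable := by
  by_cases hwH : (Fol Λ w ∩ H.1).Finite
  · exact hwH.countable
  let p : SigmaOf A V Λ := ⟨wordBlur w H, wordBlur_mem_SigmaOf hwH⟩
  choose y hyΛ hy using fun a : ↥(Fol Λ w ∩ H.1) => nonempty_SigmaOf_inter_Z (V := V) a.2.1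
  let z : ↥(Fol Λ w ∩ H.1) → SigmaOf A V Λ := fun a => ⟨y a, hyΛ a⟩
  have hz : Tendsto z cofinite (𝓝 p) :=
    tendsto_subtype_rng.2 <| tendsto_nhds_wordBlur Subtype.val_injective.tendsto_cofinite
      (Eventually.of_forall fun a => a.2.2) (Eventually.of_forall hy)
  have hker : ∀ a, z a ∉ (𝓝 p).ker := by
    intro a ha
    rw [nhds_subtype_eq_comap, ker_comap] at ha
    exact notMem_ker_nhds_wordBlur (hy a) ha
  have huniv : (z ⁻¹' (𝓝 p).ker)ᶜ = univ := eq_univ_of_forall hker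
  exact countable_coe_iff.1 (countable_univ_iff.1 (huniv ▸ hz.countable_compl_preimage_ker))

theorem countable_Fol_of_isLindelof [FirstCountableTopology (SigmaOf A V Λ)]
    (hL : IsLindelof (SigmaOf A V Λ)) (w : List A) : (Fol Λ w).Countable := by
  choose y hyΛ hy using fun a : Fol Λ w => nonempty_SigmaOf_inter_Z (V := V) a.2
  have hyw : y ⁻¹' (SigmaOf A V Λ ∩ Z A V w) = univ :=
    eq_univ_of_forall fun a => ⟨hyΛ a, (mem_Z_append_singleton.1 (hy a)).1⟩
  suffices (y ⁻¹' (SigmaOf A V Λ ∩ Z A V w)).Countable from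
    countable_coe_iff.1 (countable_univ_iff.1 (hyw ▸ this))
  refine (hL.inter_right isClosed_Z).induction_on (p := fun s => (y ⁻¹' s).Countable)
    (fun s t hst ht => ht.mono (preimage_mono hst)) (fun S hS hyS => ?_) fun x hx => ?_
  · rw [preimage_sUnion]
    exact hS.biUnion hyS
  rcases hxn : x.1 w.length with b | H
  · refine ⟨Z A V (w ++ [b]), mem_nhdsWithin_of_mem_nhds
      (isOpen_Z.mem_nhds (mem_Z_append_singleton.2 ⟨hx.2, hxn⟩)), ?_⟩
    refine ((countable_singleton b).preimage Subtype.val_injective).mono fun a hab => ?_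
    exact eq_of_mem_Z_append_singleton (hy a) hab
  · refine ⟨ZH A V w H ∅, mem_nhdsWithin_of_mem_nhds
      ((isOpen_ZH finite_empty).mem_nhds ⟨hx.2, Or.inl hxn⟩), ?_⟩
    refine ((countable_Fol_inter (Λ := Λ) w H).preimage Subtype.val_injective).mono fun a haH => ?_
    exact ⟨a.2, ((mem_ZH_iff_of_mem_Z (hy a)).1 haH).1⟩

end BlurShift

theorem not_compact_and_firstCountable_general {A : Type*} (V : Set (Set A)) (Λ : Set (ℕ → A))
    (hunc : ¬ (letters Λ).Countable) :
    ¬ (IsLindelof (SigmaOf A V Λ) ∧ FirstCountableTopology (SigmaOf A V Λ)) := by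
  rintro ⟨hL, _⟩
  have hFol : ∀ w, (Fol Λ w).Countable := countable_Fol_of_isLindelof hL
  exact hunc (countable_letters_of_countable_Fol hFol)

/-- If `B₁(Λ)` is uncountable, then `Σ_Λ` cannot be both compact
and first countable. -/
theorem not_compact_and_firstCountable {A : Type*} (V : Set (Set A))
    (hV : IsBlurFamily V) (Λ : Set (ℕ → A)) (hΛ : IsShiftSpace Λ)
    (hunc : ¬ (letters Λ).Countable) :
    ¬ (@IsCompact _ (tau A V) (SigmaOf A V Λ) ∧
        @FirstCountableTopology (SigmaOf A V Λ) (subTau A V (SigmaOf A V Λ))) := by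
  rintro ⟨hcompact, hfirst⟩
  exact not_compact_and_firstCountable_general V Λ hunc ⟨hcompact.isLindelof, hfirst⟩

end BlurPaper
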